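/- (Rank estimation lemma.) Let XA ∈ ℝ^{n×m} be fixed and let M be a random n×m matrix on some probability space. For μ > 0 define r̂ = max{j : σ_j(M) ≥ μ}. If r = rank(XA) and δ_r = σ_r(XA) > (1+ξ)μ for some ξ ∈ (0,1], then P{r̂ = r} ≥ 1 − P{σ_1(M − XA) ≥ ξμ}. -/

import Mathlib

open MeasureTheory ProbabilityTheory Matrix Set
open scoped ENNReal NNReal

noncomputable section

/-- Euclidean (ℓ₂) norm of a finitely indexed real vector. -/
def l2norm {I : Type*} [Fintype I] (v : I → ℝ) : ℝ := Real.sqrt (∑ i, v i ^ 2)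

/-- Frobenius norm of a real matrix. -/
def frobNorm {I J : Type*} [Fintype I] [Fintype J] (M : Matrix I J ℝ) : ℝ :=
  Real.sqrt (∑ i, ∑ j, M i j ^ 2)

/-- ℓ₂/ℓ₁ norm: the sum of the ℓ₂ norms of the rows. -/
def norm21 {I J : Type*} [Fintype I] [Fintype J] (M : Matrix I J ℝ) : ℝ :=
  ∑ i, l2norm (M i)

open Classical in
/-- Row support: indices of nonzero rows. -/
def rowSupport {I J : Type*} [Fintype I] [Fintype J] (M : Matrix I J ℝ) : Finset I :=
  Finset.univ.filter (fun i => M i ≠ 0)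

/-- The j-th largest singular value (j ≥ 1), via the Courant–Fischer max–min
characterization: `σ_j(M) = max_{dim V = j} min_{v ∈ V, ‖v‖=1} ‖Mv‖`. -/
def singularValue {I J : Type*} [Fintype I] [Fintype J] (M : Matrix I J ℝ) (j : ℕ) : ℝ :=
  sSup { t | ∃ V : Submodule ℝ (J → ℝ), Module.finrank ℝ V = j ∧
    t = sInf { u | ∃ v ∈ V, l2norm v = 1 ∧ u = l2norm (M.mulVec v) } }

/-- Operator norm (largest singular value). -/
def opNorm {I J : Type*} [Fintype I] [Fintype J] (M : Matrix I J ℝ) : ℝ :=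
  sSup { t | ∃ v : J → ℝ, l2norm v = 1 ∧ t = l2norm (M.mulVec v) }

/-- Schatten-q norm. -/
def schattenNorm {I J : Type*} [Fintype I] [Fintype J] (M : Matrix I J ℝ) (q : ℝ) : ℝ :=
  (∑ i ∈ Finset.Icc 1 (min (Fintype.card I) (Fintype.card J)), singularValue M i ^ q) ^ (1 / q)

/-- Squared lower k-sparse Riesz constant `κ₋²(k)`:
the minimum over column subsets B with |B| = k of the smallest eigenvalue of X_B' X_B. -/
def kappaMinusSq {n p : ℕ} (X : Matrix (Fin n) (Fin p) ℝ) (k : ℕ) : ℝ :=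
  sInf { t | ∃ B : Finset (Fin p), B.card = k ∧ ∃ v : Fin p → ℝ,
    (∀ i, i ∉ B → v i = 0) ∧ l2norm v = 1 ∧ t = l2norm (X.mulVec v) ^ 2 }

/-- Squared upper k-sparse Riesz constant `κ₊²(k)`. -/
def kappaPlusSq {n p : ℕ} (X : Matrix (Fin n) (Fin p) ℝ) (k : ℕ) : ℝ :=
  sSup { t | ∃ B : Finset (Fin p), B.card = k ∧ ∃ v : Fin p → ℝ,
    (∀ i, i ∉ B → v i = 0) ∧ l2norm v = 1 ∧ t = l2norm (X.mulVec v) ^ 2 }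

def kappaMinus {n p : ℕ} (X : Matrix (Fin n) (Fin p) ℝ) (k : ℕ) : ℝ :=
  Real.sqrt (kappaMinusSq X k)

def kappaPlus {n p : ℕ} (X : Matrix (Fin n) (Fin p) ℝ) (k : ℕ) : ℝ :=
  Real.sqrt (kappaPlusSq X k)

/-- Membership in the parameter space Θ(s, r, d, γ): rank r, all nonzero singular values in
(d, γd], and at most s nonzero rows. (Singular values are automatically nonincreasing.) -/
def memTheta {p m : ℕ} (A : Matrix (Fin p) (Fin m) ℝ) (s r : ℕ) (d γ : ℝ) : Prop :=
  A.rank = r ∧ 0 < d ∧ singularValue A 1 ≤ γ * d ∧ d < singularValue A r ∧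
    (rowSupport A).card ≤ s

/-- `V` is a matrix of top-r right singular vectors of `M`: the columns of `V` are orthonormal
eigenvectors of `MᵀM`, the j-th column with eigenvalue `σ_j(M)²`. -/
def IsRightSingularVectors {I J : Type*} [Fintype I] [Fintype J] {r : ℕ}
    (M : Matrix I J ℝ) (V : Matrix J (Fin r) ℝ) : Prop :=
  Vᵀ * V = 1 ∧ ∀ j : Fin r,
    (Mᵀ * M).mulVec (fun i => V i j) = (singularValue M (j.1 + 1)) ^ 2 • (fun i => V i j)

/-- `U` is a matrix of top-r left singular vectors of `M`. -/
def IsLeftSingularVectors {I J : Type*} [Fintype I] [Fintype J] {r : ℕ}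
    (M : Matrix I J ℝ) (U : Matrix I (Fin r) ℝ) : Prop :=
  IsRightSingularVectors Mᵀ U

instance matrixMeasurableSpace {n m : ℕ} : MeasurableSpace (Matrix (Fin n) (Fin m) ℝ) :=
  (inferInstance : MeasurableSpace (Fin n → Fin m → ℝ))

/-- Law of an n×m random matrix with i.i.d. N(0, v) entries. -/
def gaussianMatrix (n m : ℕ) (v : ℝ≥0) : Measure (Matrix (Fin n) (Fin m) ℝ) :=
  Measure.pi fun _ : Fin n => Measure.pi fun _ : Fin m => gaussianReal 0 v

open Classical in
/-- Kullback–Leibler divergence D(P‖Q). -/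
def klDivM {Ω : Type*} [MeasurableSpace Ω] (P Q : Measure Ω) : ℝ≥0∞ :=
  if P ≪ Q ∧ Integrable (fun x => Real.log (P.rnDeriv Q x).toReal) P
  then ENNReal.ofReal (∫ x, Real.log (P.rnDeriv Q x).toReal ∂P)
  else ∞

/-- ε-packing number of T with respect to the distance ρ: the maximal cardinality of a subset
of T whose pairwise ρ-distances are all at least ε. -/
def packingNumber {α : Type*} (T : Set α) (ρ : α → α → ℝ) (ε : ℝ) : ℕ :=
  sSup { k | ∃ S : Finset α, ↑S ⊆ T ∧ (∀ x ∈ S, ∀ y ∈ S, x ≠ y → ε ≤ ρ x y) ∧ S.card = k }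

/-- Moore–Penrose pseudoinverse (characterized by the four Penrose equations). -/
def IsMoorePenrose {k : ℕ} (M Mi : Matrix (Fin k) (Fin k) ℝ) : Prop :=
  M * Mi * M = M ∧ Mi * M * Mi = Mi ∧ (M * Mi)ᵀ = M * Mi ∧ (Mi * M)ᵀ = Mi * M

theorem l2norm_eq_norm {I : Type*} [Fintype I] (v : I → ℝ) : l2norm v = ‖WithLp.toLp 2 v‖ := by
  simp [l2norm, EuclideanSpace.norm_eq]

theorem l2norm_nonneg' {I : Type*} [Fintype I] (v : I → ℝ) : 0 ≤ l2norm v := Real.sqrt_nonneg _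

theorem l2norm_add_le' {I : Type*} [Fintype I] (v w : I → ℝ) :
    l2norm (v + w) ≤ l2norm v + l2norm w := by
  simp only [l2norm_eq_norm, WithLp.toLp_add]
  exact norm_add_le _ _

theorem l2norm_smul' {I : Type*} [Fintype I] (c : ℝ) (v : I → ℝ) :
    l2norm (c • v) = |c| * l2norm v := by
  simp only [l2norm_eq_norm, WithLp.toLp_smul, norm_smul, Real.norm_eq_abs]

theorem l2norm_neg' {I : Type*} [Fintype I] (v : I → ℝ) : l2norm (-v) = l2norm v := by
  simp [l2norm]

theorem l2norm_pos' {I : Type*} [Fintype I] {v : I → ℝ} (hv : v ≠ 0) : 0 < l2norm v := by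
  rw [l2norm_eq_norm, norm_pos_iff]
  simpa using hv

theorem exists_unit {I : Type*} [Fintype I] (V : Submodule ℝ (I → ℝ)) (hV : V ≠ ⊥) :
    ∃ v ∈ V, l2norm v = 1 := by
  obtain ⟨v, hv, h0⟩ := Submodule.exists_mem_ne_zero_of_ne_bot hV
  refine ⟨(l2norm v)⁻¹ • v, V.smul_mem _ hv, ?_⟩
  have := l2norm_pos' h0
  rw [l2norm_smul', abs_of_pos (inv_pos.2 this), inv_mul_cancel₀ this.ne']

theorem exists_bound {n m : ℕ} (M : Matrix (Fin n) (Fin m) ℝ) :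
    ∃ C : ℝ, 0 ≤ C ∧ ∀ v, l2norm v = 1 → l2norm (M.mulVec v) ≤ C := by
  let T := LinearMap.toContinuousLinearMap (Matrix.toEuclideanLin M)
  refine ⟨‖T‖, norm_nonneg _, fun v hv => ?_⟩
  have h := T.le_opNorm (WithLp.toLp 2 v)
  rw [l2norm_eq_norm] at hv
  rw [hv, mul_one] at h
  rw [l2norm_eq_norm]
  exact h

theorem bddBelow_inner {n m : ℕ} (M : Matrix (Fin n) (Fin m) ℝ)
    (V : Submodule ℝ (Fin m → ℝ)) :
    BddBelow { u | ∃ v ∈ V, l2norm v = 1 ∧ u = l2norm (M.mulVec v) } :=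
  ⟨0, by rintro _ ⟨v, -, -, rfl⟩; exact l2norm_nonneg' _⟩

theorem bddAbove_outer {n m : ℕ} (M : Matrix (Fin n) (Fin m) ℝ) (j : ℕ) :
    BddAbove { t | ∃ V : Submodule ℝ (Fin m → ℝ), Module.finrank ℝ V = j ∧
      t = sInf { u | ∃ v ∈ V, l2norm v = 1 ∧ u = l2norm (M.mulVec v) } } := by
  obtain ⟨C, hC, h⟩ := exists_bound M
  refine ⟨C, ?_⟩
  rintro _ ⟨V, -, rfl⟩
  by_cases hV : V = ⊥
  · refine le_trans (le_of_eq ?_) hC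
    have : { u | ∃ v ∈ V, l2norm v = 1 ∧ u = l2norm (M.mulVec v) } = ∅ := by
      ext u
      simp only [Set.mem_setOf_eq, Set.mem_empty_iff_false, iff_false]
      rintro ⟨v, hv, h1, -⟩
      rw [hV, Submodule.mem_bot] at hv
      subst hv
      simp [l2norm] at h1
    rw [this, Real.sInf_empty]
  · obtain ⟨v, hv, h1⟩ := exists_unit V hV
    exact (csInf_le (bddBelow_inner M V) ⟨v, hv, h1, rfl⟩).trans (h v h1)

theorem l2norm_mulVec_le {n m : ℕ} (E : Matrix (Fin n) (Fin m) ℝ) (v : Fin m → ℝ)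
    (hv : l2norm v = 1) : l2norm (E.mulVec v) ≤ singularValue E 1 := by
  have hv0 : v ≠ 0 := by
    rintro rfl
    simp [l2norm] at hv
  refine le_csSup_of_le (bddAbove_outer E 1) ⟨ℝ ∙ v, finrank_span_singleton hv0, rfl⟩ ?_
  refine le_csInf ⟨_, v, Submodule.mem_span_singleton_self v, hv, rfl⟩ ?_
  rintro _ ⟨w, hw, h1, rfl⟩
  obtain ⟨c, rfl⟩ := Submodule.mem_span_singleton.1 hw
  rw [l2norm_smul', hv, mul_one] at h1
  rw [Matrix.mulVec_smul, l2norm_smul', h1, one_mul]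

theorem rank_est_pointwise {n m : ℕ} (XA M : Matrix (Fin n) (Fin m) ℝ)
    (μ ξ : ℝ) (hμ : 0 < μ) (hξ : ξ ∈ Set.Ioc (0 : ℝ) 1)
    (r : ℕ) (hr : r = (XA).rank)
    (hδ : (1 + ξ) * μ < singularValue XA r)
    (hE : singularValue (M - XA) 1 < ξ * μ) :
    sSup {j : ℕ | μ ≤ singularValue M j} = r := by
  obtain ⟨hξ0, hξ1⟩ := hξ
  have hpos : 0 < (1 + ξ) * μ := by positivity
  have hEv := l2norm_mulVec_le (M - XA)
  refine IsGreatest.csSup_eq ⟨?_, ?_⟩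
  · have hne : { t | ∃ V : Submodule ℝ (Fin m → ℝ), Module.finrank ℝ V = r ∧
      t = sInf { u | ∃ v ∈ V, l2norm v = 1 ∧ u = l2norm (XA.mulVec v) } }.Nonempty := by
      by_contra h
      rw [Set.not_nonempty_iff_eq_empty] at h
      rw [singularValue, h, Real.sSup_empty] at hδ
      linarith
    obtain ⟨_, ⟨V, hV, rfl⟩, hlt⟩ := exists_lt_of_lt_csSup hne hδ
    have hX : ∀ v ∈ V, l2norm v = 1 → (1 + ξ) * μ < l2norm (XA.mulVec v) := fun v hv h1 =>
      hlt.trans_le (csInf_le (bddBelow_inner XA V) ⟨v, hv, h1, rfl⟩)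
    have hne' : { u | ∃ v ∈ V, l2norm v = 1 ∧ u = l2norm (XA.mulVec v) }.Nonempty := by
      by_contra h
      rw [Set.not_nonempty_iff_eq_empty] at h
      rw [h, Real.sInf_empty] at hlt
      linarith
    obtain ⟨_, w, hw, hw1, -⟩ := hne'
    refine le_csSup_of_le (bddAbove_outer M r) ⟨V, hV, rfl⟩ ?_
    refine le_csInf ⟨_, w, hw, hw1, rfl⟩ ?_
    rintro _ ⟨v, hv, h1, rfl⟩
    have h2 := hX v hv h1
    have h3 := hEv v h1
    have h4 : l2norm (XA.mulVec v) ≤ l2norm (M.mulVec v) + l2norm ((M - XA).mulVec v) := by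
      have := l2norm_add_le' (M.mulVec v) (-((M - XA).mulVec v))
      rw [l2norm_neg'] at this
      convert this using 2
      rw [Matrix.sub_mulVec]; abel
    nlinarith
  · intro j hj
    by_contra hjr
    push Not at hjr
    have hj : μ ≤ singularValue M j := hj
    have hb : singularValue M j ≤ max (singularValue (M - XA) 1) 0 := by
      refine Real.sSup_le ?_ (le_max_right _ _)
      rintro _ ⟨V, hV, rfl⟩
      have hinf : V ⊓ LinearMap.ker XA.mulVecLin ≠ ⊥ := by
        intro h
        have h1 := Submodule.finrank_sup_add_finrank_inf_eq V (LinearMap.ker XA.mulVecLin)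
        have h2 := LinearMap.finrank_range_add_finrank_ker XA.mulVecLin
        have h3 := Submodule.finrank_le (V ⊔ LinearMap.ker XA.mulVecLin)
        rw [h, finrank_bot] at h1
        rw [Matrix.rank] at hr
        omega
      obtain ⟨v, ⟨hv, hk⟩, h1⟩ := exists_unit _ hinf
      have hk : XA.mulVec v = 0 := by simpa using hk
      refine (csInf_le (bddBelow_inner M V) ⟨v, hv, h1, rfl⟩).trans (le_max_of_le_left ?_)
      have := hEv v h1
      rwa [Matrix.sub_mulVec, hk, sub_zero] at this
    have : max (singularValue (M - XA) 1) 0 < μ := max_lt (by nlinarith) hμ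
    linarith

/-- Rank estimation lemma. If `r = rank(XA)` and `σ_r(XA) > (1+ξ)μ`, then with
`r̂ = max{j : σ_j(M) ≥ μ}` we have `P{r̂ = r} ≥ 1 − P{σ_1(M − XA) ≥ ξμ}`. -/
theorem stmt4 {Ω : Type*} [MeasurableSpace Ω] (P : Measure Ω) [IsProbabilityMeasure P]
    {n m : ℕ} (XA : Matrix (Fin n) (Fin m) ℝ) (M : Ω → Matrix (Fin n) (Fin m) ℝ)
    (μ ξ : ℝ) (hμ : 0 < μ) (hξ : ξ ∈ Set.Ioc (0 : ℝ) 1)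
    (r : ℕ) (hr : r = (XA).rank)
    (hδ : (1 + ξ) * μ < singularValue XA r) :
    1 - P {ω | ξ * μ ≤ singularValue (M ω - XA) 1} ≤
      P {ω | sSup {j : ℕ | μ ≤ singularValue (M ω) j} = r} := by
  rw [tsub_le_iff_right]
  calc (1 : ℝ≥0∞) = P Set.univ := measure_univ.symm
    _ ≤ P ({ω | sSup {j : ℕ | μ ≤ singularValue (M ω) j} = r} ∪
          {ω | ξ * μ ≤ singularValue (M ω - XA) 1}) := by
        refine measure_mono fun ω _ => ?_
        by_cases h : ξ * μ ≤ singularValue (M ω - XA) 1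
        · exact Or.inr h
        · exact Or.inl (rank_est_pointwise XA (M ω) μ ξ hμ hξ r hr hδ (not_le.1 h))
    _ ≤ _ := measure_union_le _ _

end
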